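/- Let R be a commutative ring. In the poset, ordered by inclusion, of localizing subcategories of D(R) of the form Loc({R_f : f ∈ √J}) with J an ideal of R, the finite elements are exactly those of the form Loc({R_f : f ∈ √J}) with J a finitely generated ideal. -/

import Mathlib

open CategoryTheory CategoryTheory.Limits CategoryTheory.Pretriangulated ZeroObject

universe w w' v u

section TriangulatedDefs

variable {T : Type u} [Category.{v} T] [Preadditive T] [HasZeroObject T]
  [HasShift T ℤ] [∀ n : ℤ, (shiftFunctor T n).Additive] [Pretriangulated T]

/-- A localizing subcategory of a (pre)triangulated category, encoded as a set of
objects: it is closed under isomorphisms, contains the zero object, is stable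
under shifts, closed under cones of distinguished triangles (hence a full
triangulated subcategory), and closed under arbitrary small coproducts
(phrased via colimit cofans, so that no global existence of coproducts
is needed). -/
structure IsLocalizingSub (S : Set T) : Prop where
  zero_mem : (0 : T) ∈ S
  mem_of_iso : ∀ {x y : T}, (x ≅ y) → x ∈ S → y ∈ S
  shift_mem : ∀ (n : ℤ) {x : T}, x ∈ S → x⟦n⟧ ∈ S
  cone_mem : ∀ (Tr : Triangle T), Tr ∈ distinguishedTriangles →
    Tr.obj₁ ∈ S → Tr.obj₂ ∈ S → Tr.obj₃ ∈ S
  coprod_mem : ∀ {ι : Type w} (f : ι → T) (c : Cofan f), IsColimit c →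
    (∀ i, f i ∈ S) → c.pt ∈ S

/-- A colocalizing subcategory: as `IsLocalizingSub` but with products instead
of coproducts. -/
structure IsColocalizingSub (S : Set T) : Prop where
  zero_mem : (0 : T) ∈ S
  mem_of_iso : ∀ {x y : T}, (x ≅ y) → x ∈ S → y ∈ S
  shift_mem : ∀ (n : ℤ) {x : T}, x ∈ S → x⟦n⟧ ∈ S
  cone_mem : ∀ (Tr : Triangle T), Tr ∈ distinguishedTriangles →
    Tr.obj₁ ∈ S → Tr.obj₂ ∈ S → Tr.obj₃ ∈ S
  prod_mem : ∀ {ι : Type w} (f : ι → T) (c : Fan f), IsLimit c →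
    (∀ i, f i ∈ S) → c.pt ∈ S

/-- `Loc S`: the smallest localizing subcategory containing the set of
objects `S` (the intersection of all localizing subcategories containing it). -/
def Loc (S : Set T) : Set T :=
  ⋂₀ {L : Set T | IsLocalizingSub.{w} L ∧ S ⊆ L}

/-- The right orthogonal of a set of objects. -/
def rightOrth (C : Set T) : Set T :=
  {x : T | ∀ ⦃c : T⦄, c ∈ C → ∀ (g : c ⟶ x), g = 0}

end TriangulatedDefs

section CompactDefs

variable {T : Type u} [Category.{v} T] [Preadditive T]

/-- The canonical comparison map `⨁ᵢ Hom(x, fᵢ) →+ Hom(x, ∐ f)` associated to a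
cofan `c` on a family `f`. -/
noncomputable def cofanHomComparison {ι : Type w} (x : T) (f : ι → T) (c : Cofan f) :
    (Π₀ i, (x ⟶ f i)) →+ (x ⟶ c.pt) :=
  letI := Classical.decEq ι
  DFinsupp.sumAddHom (fun i => AddMonoidHom.mk' (fun φ => φ ≫ c.inj i)
    (fun φ ψ => Preadditive.add_comp _ _ _ φ ψ (c.inj i)))

/-- An object `x` is compact if `Hom(x, -)` commutes with arbitrary small
coproducts, i.e. for every colimit cofan on a family `f`, the canonical map
`⨁ᵢ Hom(x, fᵢ) → Hom(x, ∐ f)` is bijective. -/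
def IsCompactObj (x : T) : Prop :=
  ∀ ⦃ι : Type w⦄ (f : ι → T) (c : Cofan f), IsColimit c →
    Function.Bijective (cofanHomComparison x f c)

end CompactDefs

section DR

variable (R : Type u) [CommRing R] [HasDerivedCategory.{w'} (ModuleCat.{u} R)]

/-- The `R`-module `M`, regarded as an object of the derived category `D(R)`,
as a complex concentrated in degree `0`. -/
noncomputable def smod (M : ModuleCat.{u} R) : DerivedCategory (ModuleCat.{u} R) :=
  (DerivedCategory.singleFunctor (ModuleCat.{u} R) 0).obj M

end DR
/-- An element `c` of a preorder is *finite* (compact) if whenever `c ≤ ⋁S` for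
a set `S` admitting a least upper bound, there is a finite subset `K ⊆ S`
admitting a least upper bound with `c ≤ ⋁K`. -/
def IsFiniteElt {α : Type*} [Preorder α] (c : α) : Prop :=
  ∀ (S : Set α) (b : α), IsLUB S b → c ≤ b →
    ∃ K ⊆ S, K.Finite ∧ ∃ b' : α, IsLUB K b' ∧ c ≤ b'

section Statement14

variable (R : Type u) [CommRing R] [HasDerivedCategory.{w'} (ModuleCat.{u} R)]

/-- The localizing subcategory `Loc({R_f : f ∈ √J})` of `D(R)`. -/
noncomputable def locRad (J : Ideal R) : Set (DerivedCategory (ModuleCat.{u} R)) :=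
  Loc.{u} {x | ∃ f ∈ J.radical, x = smod R (ModuleCat.of R (Localization.Away f))}


theorem aux_isLocalizing {T : Type u} [Category.{v} T] [Preadditive T] [HasZeroObject T]
    [HasShift T ℤ] [∀ n : ℤ, (shiftFunctor T n).Additive] [Pretriangulated T] (M : T) :
    IsLocalizingSub.{w} {X : T | ∀ (n : ℤ) (φ : X ⟶ M⟦n⟧), φ = 0} := by
  have hiso : ∀ {x y : T}, (x ≅ y) → (∀ (n : ℤ) (φ : x ⟶ M⟦n⟧), φ = 0) →
      (∀ (n : ℤ) (φ : y ⟶ M⟦n⟧), φ = 0) := by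
    intro x y e h n φ
    rw [← cancel_epi e.hom, comp_zero]
    exact h n _
  have hshift : ∀ (m : ℤ) {x : T}, (∀ (n : ℤ) (φ : x ⟶ M⟦n⟧), φ = 0) →
      (∀ (n : ℤ) (φ : x⟦m⟧ ⟶ M⟦n⟧), φ = 0) := by
    intro m x h n φ
    apply (shiftFunctor T (-m)).map_injective
    have h1 := h (n + -m) ((shiftFunctorCompIsoId T m (-m) (by simp)).inv.app x ≫ φ⟦-m⟧' ≫
      (shiftFunctorAdd T n (-m)).inv.app M)
    rw [← cancel_epi ((shiftFunctorCompIsoId T m (-m) (by simp)).inv.app x),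
      ← cancel_mono ((shiftFunctorAdd T n (-m)).inv.app M)]
    simpa using h1
  refine ⟨?_, ?_, ?_, ?_, ?_⟩
  · intro n φ
    exact (isZero_zero T).eq_of_src _ _
  · intro x y e h
    exact hiso e h
  · intro m x h
    exact hshift m h
  · intro Tr hTr h1 h2 n φ
    obtain ⟨g, rfl⟩ := Triangle.yoneda_exact₃ Tr hTr φ (h2 n _)
    rw [hshift 1 h1 n g, comp_zero]
  · intro ι f c hc h n φ
    apply Cofan.IsColimit.hom_ext hc
    intro i
    rw [comp_zero]
    exact h i n _

theorem aux_away_mem (g : R) (K : Type u) [AddCommGroup K] [Module R K]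
    (hK : ∀ x : K, g • x = 0) (n : ℤ)
    (φ : smod R (ModuleCat.of R (Localization.Away g)) ⟶
      (smod R (ModuleCat.of R K))⟦n⟧) : φ = 0 := by
  have hz : g • 𝟙 (ModuleCat.of R K) = 0 := by
    ext x
    exact hK x
  have hz' : g • 𝟙 ((smod R (ModuleCat.of R K))⟦n⟧) = 0 := by
    have : g • 𝟙 (smod R (ModuleCat.of R K)) = 0 := by
      have h := Functor.map_smul (DerivedCategory.singleFunctor (ModuleCat.{u} R) 0)
        g (𝟙 (ModuleCat.of R K))
      rw [hz, Functor.map_zero, CategoryTheory.Functor.map_id] at h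
      exact h.symm
    have := congrArg
      (fun t => (shiftFunctor (DerivedCategory (ModuleCat.{u} R)) n).map t) this
    simpa [Functor.map_smul] using this
  have hφ : g • φ = 0 := by
    have : φ ≫ (g • 𝟙 ((smod R (ModuleCat.of R K))⟦n⟧)) = g • φ := by
      rw [Linear.comp_smul, Category.comp_id]
    rw [← this, hz', comp_zero]
  let i : ModuleCat.of R (Localization.Away g) ⟶ ModuleCat.of R (Localization.Away g) :=
    ModuleCat.ofHom (LinearMap.mulLeft R (IsLocalization.Away.invSelf (S := Localization.Away g) g))
  have hi : g • i = 𝟙 _ := by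
    ext x
    change g • (IsLocalization.Away.invSelf (S := Localization.Away g) g * x) = x
    rw [Algebra.smul_def, ← mul_assoc, IsLocalization.Away.mul_invSelf, one_mul]
  let j : smod R (ModuleCat.of R (Localization.Away g)) ⟶
      smod R (ModuleCat.of R (Localization.Away g)) :=
    (DerivedCategory.singleFunctor (ModuleCat.{u} R) 0).map i
  have hj : g • j = 𝟙 _ := by
    have h := Functor.map_smul (DerivedCategory.singleFunctor (ModuleCat.{u} R) 0) g i
    rw [hi, CategoryTheory.Functor.map_id] at h
    exact h.symm
  rw [← Category.id_comp φ, ← hj, Linear.smul_comp, ← Linear.comp_smul, hφ, comp_zero]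

theorem aux_locRad_le_iff (I J : Ideal R) :
    locRad R I ⊆ locRad R J ↔ I ≤ J.radical := by
  constructor
  · intro h f hf
    by_contra hfJ
    rw [Ideal.radical_eq_sInf, Submodule.mem_sInf] at hfJ
    push Not at hfJ
    obtain ⟨p', hp'⟩ := hfJ
    obtain ⟨p, rfl⟩ : ∃ p : Ideal R, p = p' := ⟨p', rfl⟩
    obtain ⟨⟨hJp, hp⟩, hfp⟩ := hp'
    have h1 : smod R (ModuleCat.of R (Localization.Away f)) ∈ locRad R I := by
      intro L hL
      exact hL.2 ⟨f, Ideal.le_radical hf, rfl⟩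
    have h2 := h h1 _ ⟨aux_isLocalizing (smod R (ModuleCat.of R p.ResidueField)), by
      rintro _ ⟨g, hg, rfl⟩ n φ
      apply aux_away_mem
      intro x
      have : algebraMap R p.ResidueField g = 0 := by
        rw [Ideal.algebraMap_residueField_eq_zero]
        exact hp.radical_le_iff.2 hJp hg
      rw [Algebra.smul_def, this, zero_mul]⟩
    have hu : IsUnit (algebraMap R p.ResidueField f) := by
      rw [isUnit_iff_ne_zero, Ne, Ideal.algebraMap_residueField_eq_zero]
      exact hfp
    let a : Localization.Away f →ₐ[R] p.ResidueField :=
      { IsLocalization.Away.lift (S := Localization.Away f) f hu with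
        commutes' := fun r => IsLocalization.Away.lift_eq f hu r }
    let b : ModuleCat.of R (Localization.Away f) ⟶ ModuleCat.of R p.ResidueField :=
      ModuleCat.ofHom a.toLinearMap
    have h3 := h2 0 ((DerivedCategory.singleFunctor (ModuleCat.{u} R) 0).map b ≫
      (shiftFunctorZero (DerivedCategory (ModuleCat.{u} R)) ℤ).inv.app _)
    have h4 : (DerivedCategory.singleFunctor (ModuleCat.{u} R) 0).map b = 0 := by
      rw [← cancel_mono ((shiftFunctorZero (DerivedCategory (ModuleCat.{u} R)) ℤ).inv.app _),
        zero_comp]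
      exact h3
    have h5 : b = 0 := by
      apply (DerivedCategory.singleFunctor (ModuleCat.{u} R) 0).map_injective
      rw [h4, Functor.map_zero]
    have h6 : a 1 = 0 := by
      change b.hom (1 : Localization.Away f) = 0
      rw [h5]
      rfl
    rw [map_one] at h6
    exact one_ne_zero h6
  · intro h x hx L hL
    refine hx L ⟨hL.1, ?_⟩
    rintro _ ⟨f, hf, rfl⟩
    exact hL.2 ⟨f, Ideal.radical_le_radical_iff.2 h hf, rfl⟩

/-- Theorem: in the poset (ordered by inclusion) of localizing subcategories of
`D(R)` of the form `Loc({R_f : f ∈ √J})` with `J` an ideal, the finite elements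
are exactly those with `J` finitely generated. -/
theorem isFiniteElt_locRad_iff (J : Ideal R) :
    IsFiniteElt
      (⟨locRad R J, J, rfl⟩ :
        {L : Set (DerivedCategory (ModuleCat.{u} R)) //
          ∃ J' : Ideal R, L = locRad R J'}) ↔
    ∃ J' : Ideal R, J'.FG ∧ locRad R J = locRad R J' := by
  constructor
  · intro h
    obtain ⟨K, hKS, hKf, b', hb', hJb'⟩ := h
      {L | ∃ f ∈ J, L.1 = locRad R (Ideal.span {f})} ⟨locRad R J, J, rfl⟩ (by
        constructor
        · rintro ⟨_, L, rfl⟩ ⟨f, hf, hfL⟩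
          change locRad R L ⊆ locRad R J
          change locRad R L = _ at hfL
          rw [hfL, aux_locRad_le_iff, Ideal.span_singleton_le_iff_mem]
          exact Ideal.le_radical hf
        · rintro ⟨_, I, rfl⟩ hI
          change locRad R J ⊆ locRad R I
          rw [aux_locRad_le_iff]
          intro f hf
          have h1 : locRad R (Ideal.span {f}) ⊆ locRad R I :=
            @hI ⟨locRad R (Ideal.span {f}), _, rfl⟩ ⟨f, hf, rfl⟩
          rwa [aux_locRad_le_iff, Ideal.span_singleton_le_iff_mem] at h1) le_rfl
    choose! F hFJ hF using hKS
    refine ⟨Ideal.span (F '' K), Submodule.fg_span (hKf.image F), ?_⟩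
    apply Set.Subset.antisymm
    · have h1 : b' ≤ ⟨locRad R (Ideal.span (F '' K)), _, rfl⟩ := by
        apply hb'.2
        intro L hL
        change L.1 ⊆ locRad R _
        rw [hF hL, aux_locRad_le_iff]
        exact (Ideal.span_mono (by simpa using Set.mem_image_of_mem F hL)).trans Ideal.le_radical
      exact hJb'.trans h1
    · rw [aux_locRad_le_iff]
      refine le_trans (Ideal.span_le.2 ?_) Ideal.le_radical
      rintro _ ⟨L, hL, rfl⟩
      exact hFJ hL
  · rintro ⟨J', hJ', hJJ'⟩ S b hb hJb
    choose I hI using fun s : {L : Set (DerivedCategory (ModuleCat.{u} R)) //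
          ∃ J' : Ideal R, L = locRad R J'} => s.2
    have h1 : b ≤ ⟨locRad R (sSup (I '' S)), _, rfl⟩ := by
      apply hb.2
      intro L hL
      change L.1 ⊆ locRad R _
      rw [hI L, aux_locRad_le_iff]
      exact (le_sSup (Set.mem_image_of_mem I hL)).trans Ideal.le_radical
    have h2 : locRad R J' ⊆ locRad R (sSup (I '' S)) := by
      rw [← hJJ']
      exact hJb.trans h1
    rw [aux_locRad_le_iff] at h2
    obtain ⟨n, hn⟩ := Ideal.exists_pow_le_of_le_radical_of_fg h2 hJ'
    have hc := (Submodule.fg_iff_compact _).1 (hJ'.pow (n := n))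
    rw [CompleteLattice.isCompactElement_iff_exists_le_sSup_of_le_sSup] at hc
    obtain ⟨t, htS, hle⟩ := hc _ hn
    obtain ⟨K, hKS, hKf, hKt⟩ : ∃ K ⊆ S, K.Finite ∧ I '' K = (t : Set (Ideal R)) := by
      have : Nonempty {L : Set (DerivedCategory (ModuleCat.{u} R)) //
          ∃ J' : Ideal R, L = locRad R J'} := ⟨b⟩
      choose! G hGS hG using htS
      refine ⟨G '' (t : Set (Ideal R)), ?_, t.finite_toSet.image G, ?_⟩
      · rintro _ ⟨a, ha, rfl⟩
        exact hGS ha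
      · rw [Set.image_image]
        exact (Set.image_congr fun a ha => hG ha).trans (Set.image_id _)
    refine ⟨K, hKS, hKf, ⟨locRad R (sSup (I '' K)), _, rfl⟩, ⟨?_, ?_⟩, ?_⟩
    · intro L hL
      change L.1 ⊆ locRad R _
      rw [hI L, aux_locRad_le_iff]
      exact (le_sSup (Set.mem_image_of_mem I hL)).trans Ideal.le_radical
    · rintro ⟨_, B, rfl⟩ hB
      change locRad R _ ⊆ locRad R _
      rw [aux_locRad_le_iff]
      apply sSup_le
      rintro _ ⟨L, hL, rfl⟩
      rw [← aux_locRad_le_iff, ← hI L]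
      exact hB hL
    · change locRad R J ⊆ locRad R _
      rw [hJJ', aux_locRad_le_iff, hKt]
      intro x hx
      refine ⟨n, ?_⟩
      rw [Finset.sup_id_eq_sSup] at hle
      exact hle (Ideal.pow_mem_pow hx n)

end Statement14
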